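/- arXiv:math/9902107 — 2 statements merged into one kernel-verified Lean document; each statement's English description precedes it below -/
import Mathlib

section
/- Let X be a set with at least five elements, let a and b be two distinct elements of X, and let H be the pointwise stabilizer of {a,b} in the symmetric group Sym(X), i.e., H = {π ∈ Sym(X) : π(a) = a and π(b) = b}. Then the subgroups F of Sym(X) with H ≤ F ≤ Sym(X) are exactly the following five: H itself; the setwise stabilizer of {a,b} (all π with π({a,b}) = {a,b}); the stabilizer of a (all π with π(a) = a); the stabilizer of b (all π with π(b) = b); and Sym(X) itself. -/
open Pointwise

universe u

/-!
Let `F` contain the pointwise stabilizer of a finite set `T` with fewer points than its complement.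
The relation "`swap x y ∈ F`" is an `F`-invariant equivalence relation, and `Tᶜ` lies in one of its
classes `C`. Every `f ∈ F` preserves `C`, since `T` is too small to receive the whole of `Tᶜ`.
Conversely, correcting a permutation that fixes `Cᶜ` pointwise by finitely many transpositions of
`C`, one for each point of `T ∩ C`, gives an element of the pointwise stabilizer of `T`. So `F` lies
between the pointwise and the setwise stabilizer of `Cᶜ ⊆ T`; for `T = {a, b}` there are four
possible `Cᶜ`, and these two stabilizers differ (by index two) only if `Cᶜ = {a, b}`.
-/

section

open Equiv MulAction

variable {α : Type*}

section FixingSubgroup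

variable {G : Type*} [Group G] [MulAction G α]

theorem fixingSubgroup_singleton_eq_stabilizer (a : α) :
    fixingSubgroup G {a} = stabilizer G a := by
  ext g
  simp only [mem_fixingSubgroup_iff, Set.mem_singleton_iff, forall_eq, mem_stabilizer_iff]

theorem fixingSubgroup_pair_eq_inf (a b : α) :
    fixingSubgroup G {a, b} = stabilizer G a ⊓ stabilizer G b := by
  rw [Set.insert_eq, fixingSubgroup_union, fixingSubgroup_singleton_eq_stabilizer,
    fixingSubgroup_singleton_eq_stabilizer]

end FixingSubgroup

section Swap

variable [DecidableEq α] {F : Subgroup (Perm α)} {S T : Set α}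

theorem swap_mem_fixingSubgroup {x y : α} (hx : x ∉ S) (hy : y ∉ S) :
    swap x y ∈ fixingSubgroup (Perm α) S := by
  rw [mem_fixingSubgroup_iff]
  intro z hz
  exact swap_apply_of_ne_of_ne (ne_of_mem_of_not_mem hz hx) (ne_of_mem_of_not_mem hz hy)

/-- The equivalence relation on `α` relating two points when the transposition exchanging them
belongs to `F`; it is reflexive because `swap x x = 1`. -/
def swapSetoid (F : Subgroup (Perm α)) : Setoid α where
  r x y := swap x y ∈ F
  iseqv :=
    { refl x := by rw [swap_self]; exact F.one_mem
      symm h := by rwa [swap_comm]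
      trans h₁ h₂ := SubmonoidClass.swap_mem_trans F h₁ h₂ }

theorem swapSetoid_apply_apply_iff {f : Perm α} (hf : f ∈ F) {x y : α} :
    swapSetoid F (f x) (f y) ↔ swapSetoid F x y := by
  change swap (f x) (f y) ∈ F ↔ swap x y ∈ F
  rw [swap_apply_apply, F.mul_mem_cancel_right (F.inv_mem hf), F.mul_mem_cancel_left hf]

theorem swapSetoid_of_fixingSubgroup_le (hF : fixingSubgroup (Perm α) T ≤ F) {x y : α}
    (hx : x ∉ T) (hy : y ∉ T) : swapSetoid F x y :=
  hF (swap_mem_fixingSubgroup hx hy)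

theorem fixingSubgroup_le_of_fixingSubgroup_insert_le {t : α} (htS : t ∉ S)
    (hF : fixingSubgroup (Perm α) (insert t S) ≤ F) (ht : ∀ x ∉ S, swapSetoid F t x) :
    fixingSubgroup (Perm α) S ≤ F := by
  intro f hf
  have hft : f t ∉ S :=
    (mem_stabilizer_set.mp (fixingSubgroup_le_stabilizer _ _ hf) t).not.mpr htS
  have hfix : swap t (f t) * f ∈ fixingSubgroup (Perm α) (insert t S) := by
    rw [SubMulAction.mem_fixingSubgroup_insert_iff]
    exact ⟨swap_apply_right t (f t), mul_mem (swap_mem_fixingSubgroup htS hft) hf⟩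
  exact (F.mul_mem_cancel_left (ht _ hft)).mp (hF hfix)

theorem fixingSubgroup_le_of_fixingSubgroup_union_le (hT : T.Finite)
    (hF : fixingSubgroup (Perm α) (S ∪ T) ≤ F) (hS : ∀ x ∉ S, ∀ y ∉ S, swapSetoid F x y) :
    fixingSubgroup (Perm α) S ≤ F := by
  induction T, hT using Set.Finite.induction_on with
  | empty => rwa [Set.union_empty] at hF
  | @insert t T _ _ ih =>
    rw [Set.union_insert] at hF
    by_cases ht : t ∈ S ∪ T
    · rw [Set.insert_eq_of_mem ht] at hF
      exact ih hF
    · refine ih (fixingSubgroup_le_of_fixingSubgroup_insert_le ht hF fun x hx ↦ ?_)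
      exact hS t (fun h ↦ ht (.inl h)) x (fun h ↦ hx (.inl h))

theorem swapSetoid_apply_self (hT : T.encard < Tᶜ.encard)
    (hF : fixingSubgroup (Perm α) T ≤ F) {f : Perm α} (hf : f ∈ F) {x : α} (hx : x ∉ T) :
    swapSetoid F (f x) x := by
  obtain ⟨y, hy, hfy⟩ : ∃ y ∉ T, f y ∉ T := by
    by_contra! h
    exact hT.not_ge (Set.encard_le_encard_of_injOn h f.injective.injOn)
  calc
    swapSetoid F (f x) (f y) :=
      (swapSetoid_apply_apply_iff hf).mpr (swapSetoid_of_fixingSubgroup_le hF hx hy)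
    swapSetoid F _ x := swapSetoid_of_fixingSubgroup_le hF hfy hx

end Swap

variable {F : Subgroup (Perm α)}

theorem exists_fixingSubgroup_le_le_stabilizer {T : Set α} (hT : T.encard < Tᶜ.encard)
    (hF : fixingSubgroup (Perm α) T ≤ F) :
    ∃ S ⊆ T, fixingSubgroup (Perm α) S ≤ F ∧ F ≤ stabilizer (Perm α) S := by
  classical
  obtain ⟨p, hp⟩ : Tᶜ.Nonempty := Set.encard_pos.mp (pos_of_gt hT)
  have hST : {x | ¬ swapSetoid F x p} ⊆ T := fun x hx ↦
    not_not.mp fun hxT ↦ hx (swapSetoid_of_fixingSubgroup_le hF hxT hp)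
  refine ⟨{x | ¬ swapSetoid F x p}, hST, ?_, fun f hf ↦ mem_stabilizer_set.mpr fun x ↦ ?_⟩
  · have hTfin : T.Finite := Set.encard_lt_top_iff.mp (hT.trans_le le_top)
    refine fixingSubgroup_le_of_fixingSubgroup_union_le hTfin ?_ fun x hx y hy ↦ ?_
    · rwa [Set.union_eq_self_of_subset_left hST]
    · exact (swapSetoid F).trans (not_not.mp hx) ((swapSetoid F).symm (not_not.mp hy))
  · have hfp : swapSetoid F (f p) p := swapSetoid_apply_self hT hF hf hp
    have hfx : swapSetoid F (f x) p ↔ swapSetoid F x p := calc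
      swapSetoid F (f x) p ↔ swapSetoid F (f x) (f p) :=
        ⟨fun h ↦ (swapSetoid F).trans h ((swapSetoid F).symm hfp),
          fun h ↦ (swapSetoid F).trans h hfp⟩
      _ ↔ swapSetoid F x p := swapSetoid_apply_apply_iff hf
    exact hfx.not

theorem mem_stabilizer_pair_iff {a b : α} {f : Perm α} :
    f ∈ stabilizer (Perm α) ({a, b} : Set α) ↔ f a = a ∧ f b = b ∨ f a = b ∧ f b = a := by
  rw [mem_stabilizer_iff, ← Set.image_smul, Set.image_pair, Set.pair_eq_pair_iff]
  rfl

theorem mem_fixingSubgroup_pair_or_swap_mul_mem [DecidableEq α] {a b : α} {f : Perm α}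
    (hf : f ∈ stabilizer (Perm α) ({a, b} : Set α)) :
    f ∈ fixingSubgroup (Perm α) {a, b} ∨ swap a b * f ∈ fixingSubgroup (Perm α) {a, b} := by
  simp only [fixingSubgroup_pair_eq_inf, Subgroup.mem_inf, mem_stabilizer_iff, Perm.smul_def,
    Perm.mul_apply]
  refine (mem_stabilizer_pair_iff.mp hf).imp_right ?_
  rintro ⟨ha, hb⟩
  rw [ha, hb]
  exact ⟨swap_apply_right a b, swap_apply_left a b⟩

theorem fixingSubgroup_pair_wcovBy_stabilizer (a b : α) :
    fixingSubgroup (Perm α) {a, b} ⩿ stabilizer (Perm α) ({a, b} : Set α) := by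
  classical
  refine wcovBy_of_eq_or_eq (fixingSubgroup_le_stabilizer _ _) fun K hK hKS ↦ ?_
  by_cases hab : swap a b ∈ K
  · refine .inr (hKS.antisymm fun f hf ↦ ?_)
    obtain hf | hf := mem_fixingSubgroup_pair_or_swap_mul_mem hf
    · exact hK hf
    · exact (K.mul_mem_cancel_left hab).mp (hK hf)
  · refine .inl (hK.antisymm' fun f hf ↦ ?_)
    refine (mem_fixingSubgroup_pair_or_swap_mul_mem (hKS hf)).resolve_right fun h ↦ hab ?_
    exact (K.mul_mem_cancel_right hf).mp (hK h)

theorem fixingSubgroup_pair_le_iff {a b : α}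
    (h : ({a, b} : Set α).encard < ({a, b} : Set α)ᶜ.encard) :
    fixingSubgroup (Perm α) {a, b} ≤ F ↔
      F = fixingSubgroup (Perm α) {a, b} ∨ F = stabilizer (Perm α) ({a, b} : Set α) ∨
        F = stabilizer (Perm α) a ∨ F = stabilizer (Perm α) b ∨ F = ⊤ := by
  constructor
  · intro hF
    obtain ⟨S, hS, hSF, hFS⟩ := exists_fixingSubgroup_le_le_stabilizer h hF
    rcases Set.subset_pair_iff_eq.mp hS with rfl | rfl | rfl | rfl
    · rw [fixingSubgroup_empty, top_le_iff] at hSF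
      simp only [hSF, or_true]
    · rw [fixingSubgroup_singleton_eq_stabilizer] at hSF
      rw [stabilizer_singleton] at hFS
      simp only [hFS.antisymm hSF, true_or, or_true]
    · rw [fixingSubgroup_singleton_eq_stabilizer] at hSF
      rw [stabilizer_singleton] at hFS
      simp only [hFS.antisymm hSF, true_or, or_true]
    · exact ((fixingSubgroup_pair_wcovBy_stabilizer a b).eq_or_eq hSF hFS).imp_right .inl
  · rintro (rfl | rfl | rfl | rfl | rfl)
    · exact le_rfl
    · exact fixingSubgroup_le_stabilizer _ _
    · exact fixingSubgroup_pair_eq_inf (G := Perm α) a b ▸ inf_le_left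
    · exact fixingSubgroup_pair_eq_inf (G := Perm α) a b ▸ inf_le_right
    · exact le_top

theorem nodup_stabilizers_pair {a b c : α} (hab : a ≠ b) (hac : a ≠ c) (hbc : b ≠ c) :
    [fixingSubgroup (Perm α) {a, b}, stabilizer (Perm α) ({a, b} : Set α),
      stabilizer (Perm α) a, stabilizer (Perm α) b, ⊤].Nodup := by
  classical
  refine List.Nodup.of_map (fun K ↦ (swap a b ∈ K, swap a c ∈ K, swap b c ∈ K)) ?_
  simp only [List.map_cons, List.map_nil, fixingSubgroup_pair_eq_inf, Subgroup.mem_inf,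
    mem_stabilizer_pair_iff]
  simp [hab, hac, hbc, hab.symm, hac.symm, hbc.symm, swap_apply_of_ne_of_ne]

theorem encard_pair_lt_encard_compl (hα : 5 ≤ Cardinal.mk α) (a b : α) :
    ({a, b} : Set α).encard < ({a, b} : Set α)ᶜ.encard := by
  by_contra! hle
  have hpair : ({a, b} : Set α).encard ≤ 2 := calc
    _ ≤ ({b} : Set α).encard + 1 := Set.encard_insert_le {b} a
    _ = 2 := by rw [Set.encard_singleton, one_add_one_eq_two]
  have h5 : (5 : ℕ∞) ≤ 4 := calc
    5 ≤ ENat.card α := Cardinal.ofNat_le_toENat.mpr hα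
    _ = ({a, b} : Set α).encard + ({a, b} : Set α)ᶜ.encard := by
      rw [Set.encard_add_encard_compl, Set.encard_univ]
    _ ≤ 2 + 2 := add_le_add hpair (hle.trans hpair)
    _ = 4 := by norm_num
  exact absurd h5 (by norm_num)

end

/-- if `X` has at least five elements, `a ≠ b` in `X`, and `H` is
the pointwise stabilizer of `{a,b}` in `Sym X`, then the subgroups between `H`
and `Sym X` are exactly: `H`, the setwise stabilizer of `{a,b}`, the
stabilizers of `a` and of `b`, and `Sym X`; moreover these five are pairwise
distinct. -/
theorem subgroups_containing_pointwise_stabilizer_pair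
    (X : Type u) (hX : 5 ≤ Cardinal.mk X) (a b : X) (hab : a ≠ b) :
    (List.Pairwise (· ≠ ·)
      [MulAction.stabilizer (Equiv.Perm X) a ⊓ MulAction.stabilizer (Equiv.Perm X) b,
        MulAction.stabilizer (Equiv.Perm X) ({a, b} : Set X),
        MulAction.stabilizer (Equiv.Perm X) a,
        MulAction.stabilizer (Equiv.Perm X) b,
        (⊤ : Subgroup (Equiv.Perm X))]) ∧
    ∀ F : Subgroup (Equiv.Perm X),
      (MulAction.stabilizer (Equiv.Perm X) a ⊓ MulAction.stabilizer (Equiv.Perm X) b ≤ F ↔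
        (F = MulAction.stabilizer (Equiv.Perm X) a ⊓ MulAction.stabilizer (Equiv.Perm X) b ∨
         F = MulAction.stabilizer (Equiv.Perm X) ({a, b} : Set X) ∨
         F = MulAction.stabilizer (Equiv.Perm X) a ∨
         F = MulAction.stabilizer (Equiv.Perm X) b ∨
         F = (⊤ : Subgroup (Equiv.Perm X)))) := by
  have hlt := encard_pair_lt_encard_compl hX a b
  obtain ⟨c, hc⟩ : ({a, b} : Set X)ᶜ.Nonempty := Set.encard_pos.mp (pos_of_gt hlt)
  have hca : c ≠ a := fun h ↦ hc (.inl h)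
  have hcb : c ≠ b := fun h ↦ hc (.inr h)
  rw [← fixingSubgroup_pair_eq_inf]
  exact ⟨nodup_stabilizers_pair hab hca.symm hcb.symm, fun F ↦ fixingSubgroup_pair_le_iff hlt⟩
end

section
/- Let T be a division ring and R = M(m,T) the full matrix ring over T, where R is not isomorphic to any of the fields F_2, F_3, F_4, F_5, nor to M(2,F_2). Let n ≥ 2, let L be the lattice of right R-submodules of R^n, G = Aut(L), and H = G(L_0). Then L(H) = L_0; that is, a right R-submodule x of R^n satisfies g(x) = x for every lattice automorphism g of L fixing every element of L_0 if and only if x = ⊕_{i∈S} e_i for some subset S of {1,…,n}. -/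
open MulOpposite

variable {R : Type*} [Ring R] {n : ℕ}

/-- The lattice of right `R`-submodules of `R^n` (as left `Rᵐᵒᵖ`-modules). -/
abbrev RLat (R : Type*) [Ring R] (n : ℕ) := Submodule Rᵐᵒᵖ (Fin n → R)

/-- `e i = ē_i · R`, the submodule spanned by the `i`-th standard basis vector. -/
def stdCoord (R : Type*) [Ring R] (n : ℕ) (i : Fin n) : RLat R n :=
  Submodule.span Rᵐᵒᵖ {Pi.single i (1 : R)}

/-- `L₀`, the sublattice of `L` generated by `e_1, …, e_n`: it consists of the
submodules `⊕_{i ∈ S} e_i` for `S ⊆ {1, …, n}`. -/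
def stdSublattice (R : Type*) [Ring R] (n : ℕ) : Set (RLat R n) :=
  Set.range fun S : Set (Fin n) => ⨆ i ∈ S, stdCoord R n i

/-- The pointwise stabilizer `G(M)` of a set `M ⊆ L` in the group of all
lattice automorphisms of `L`. -/
def fixing {L : Type*} [Lattice L] (M : Set L) : Subgroup (L ≃o L) where
  carrier := {g | ∀ m ∈ M, g m = m}
  one_mem' := fun m _ => rfl
  mul_mem' := fun {g h} hg hh m hm => by
    show g (h m) = m
    rw [hh m hm, hg m hm]
  inv_mem' := fun {g} hg m hm => by
    show g.symm m = m
    conv_lhs => rw [← hg m hm]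
    exact g.symm_apply_apply m

/-!
Left multiplication by a diagonal matrix of units is a right-linear automorphism of `R^n` that
fixes every `e_i`, hence all of `L₀`. If `l` is fixed by these automorphisms, changing the
single entry `1` at `k` into a unit `u` and subtracting the identity shows that `v ∈ l` implies
`ē_k (u - 1) v_k ∈ l`. When the elements `u - 1` generate `R` as a non-unital ring, it follows
that `ē_k R v_k R ⊆ l` for all `v ∈ l`; if `R` is moreover simple, then `ē_k ∈ l` as soon as
some `v ∈ l` has `v_k ≠ 0`, which forces `l ∈ L₀`.

In `M(m,T)` with `m ≥ 2` the off-diagonal `t E_{ij}` have the form `u - 1`, and `t E_{ii}` is a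
product of two of them. If `m = 1` and `t ∈ T` differs from `0` and `1`, then `-1 = (t - 1) +
((1 - t) - 1)`, and every nonzero `a` is `(a - 1) + 1`.
-/

section UnitAugmentation

/-- The image in `R` of the augmentation ideal of the group ring `ℤ[Rˣ]`, encoded as the
non-unital subring generated by the elements `u - 1` with `u` a unit of `R`. -/
def unitAugmentation (R : Type*) [Ring R] : NonUnitalSubring R :=
  NonUnitalSubring.closure (Set.range fun u : Rˣ => (u : R) - 1)

theorem sub_one_mem_unitAugmentation {a : R} (ha : IsUnit a) : a - 1 ∈ unitAugmentation R := by
  obtain ⟨u, rfl⟩ := ha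
  exact NonUnitalSubring.subset_closure (Set.mem_range_self u)

theorem mem_unitAugmentation_of_isNilpotent {a : R} (ha : IsNilpotent a) :
    a ∈ unitAugmentation R := by
  simpa only [add_sub_cancel_right] using sub_one_mem_unitAugmentation ha.isUnit_add_one

theorem one_mem_unitAugmentation {t : R} (ht : IsUnit t) (ht' : IsUnit (1 - t)) :
    1 ∈ unitAugmentation R := by
  have h := neg_mem (add_mem (sub_one_mem_unitAugmentation ht) (sub_one_mem_unitAugmentation ht'))
  rwa [show -(t - 1 + (1 - t - 1)) = 1 by abel] at h

theorem unitAugmentation_eq_top_of_ringEquiv {S : Type*} [Ring S] (e : R ≃+* S)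
    (hR : unitAugmentation R = ⊤) : unitAugmentation S = ⊤ := by
  have hle : unitAugmentation R ≤ (unitAugmentation S).comap e := by
    refine NonUnitalSubring.closure_le.2 ?_
    rintro _ ⟨u, rfl⟩
    simpa using sub_one_mem_unitAugmentation (u.isUnit.map e)
  rw [hR] at hle
  refine eq_top_iff.2 fun s _ => ?_
  simpa using hle (NonUnitalSubring.mem_top (e.symm s))

theorem exists_ne_zero_ne_one_of_not_ringEquiv_zmod_two [Nontrivial R]
    (hR : ¬Nonempty (R ≃+* ZMod 2)) : ∃ t : R, t ≠ 0 ∧ t ≠ 1 := by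
  by_contra! h
  have hcard : Nat.card R = 2 := (Nat.card_eq_two_iff' 0).2 ⟨1, one_ne_zero, h⟩
  have : Finite R := Nat.finite_of_card_ne_zero (by simp [hcard])
  have := Fintype.ofFinite R
  exact hR ⟨(ZMod.ringEquivOfPrime R Nat.prime_two (by rwa [Fintype.card_eq_nat_card])).symm⟩

theorem unitAugmentation_divisionRing_eq_top {D : Type*} [DivisionRing D]
    (hD : ¬Nonempty (D ≃+* ZMod 2)) : unitAugmentation D = ⊤ := by
  obtain ⟨t, ht0, ht1⟩ := exists_ne_zero_ne_one_of_not_ringEquiv_zmod_two hD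
  have hone : 1 ∈ unitAugmentation D :=
    one_mem_unitAugmentation (IsUnit.mk0 t ht0) (IsUnit.mk0 (1 - t) (sub_ne_zero.2 ht1.symm))
  refine eq_top_iff.2 fun a _ => ?_
  obtain rfl | ha := eq_or_ne a 0
  · exact zero_mem _
  · simpa only [sub_add_cancel] using add_mem (sub_one_mem_unitAugmentation (IsUnit.mk0 a ha)) hone

theorem unitAugmentation_matrix_eq_top_of_nontrivial (ι : Type*) [Fintype ι] [DecidableEq ι]
    [Nontrivial ι] : unitAugmentation (Matrix ι ι R) = ⊤ := by
  have offDiag {i j : ι} (hij : i ≠ j) (t : R) :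
      Matrix.single i j t ∈ unitAugmentation (Matrix ι ι R) :=
    mem_unitAugmentation_of_isNilpotent ⟨2, by simp [sq, hij.symm]⟩
  have diag (i : ι) (t : R) : Matrix.single i i t ∈ unitAugmentation (Matrix ι ι R) := by
    obtain ⟨j, hji⟩ := exists_ne i
    simpa using mul_mem (offDiag hji.symm t) (offDiag hji 1)
  refine eq_top_iff.2 fun a _ => ?_
  rw [Matrix.matrix_eq_sum_single a]
  refine sum_mem fun i _ => sum_mem fun j _ => ?_
  obtain rfl | hij := eq_or_ne i j
  · exact diag i _
  · exact offDiag hij _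

theorem unitAugmentation_matrix_divisionRing_eq_top {D : Type*} [DivisionRing D] {ι : Type*}
    [Fintype ι] [DecidableEq ι] [Nonempty ι] (h : ¬Nonempty (Matrix ι ι D ≃+* ZMod 2)) :
    unitAugmentation (Matrix ι ι D) = ⊤ := by
  cases subsingleton_or_nontrivial ι with
  | inl _ =>
    obtain ⟨_⟩ := nonempty_unique ι
    obtain rfl : ‹Fintype ι› = Unique.fintype := Subsingleton.elim _ _
    let e : Matrix ι ι D ≃+* D := Matrix.uniqueRingEquiv
    exact unitAugmentation_eq_top_of_ringEquiv e.symm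
      (unitAugmentation_divisionRing_eq_top fun ⟨f⟩ => h ⟨e.trans f⟩)
  | inr _ => exact unitAugmentation_matrix_eq_top_of_nontrivial ι

end UnitAugmentation

section DiagonalAutomorphisms

/-- Left multiplication by the diagonal matrix with unit entries `d`, as an automorphism of the
right module `R^n`. -/
def diagonalEquiv (d : Fin n → Rˣ) : (Fin n → R) ≃ₗ[Rᵐᵒᵖ] (Fin n → R) :=
  LinearEquiv.piCongrRight fun i => DistribMulAction.toLinearEquiv Rᵐᵒᵖ R (d i)

@[simp]
theorem diagonalEquiv_apply (d : Fin n → Rˣ) (v : Fin n → R) (i : Fin n) :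
    diagonalEquiv d v i = d i * v i :=
  rfl

theorem single_eq_op_smul_single_one (i : Fin n) (r : R) :
    (Pi.single i r : Fin n → R) = op r • Pi.single i 1 := by
  rw [← Pi.single_smul, op_smul_eq_mul, one_mul]

theorem diagonalEquiv_single_one (d : Fin n → Rˣ) (i : Fin n) :
    diagonalEquiv d (Pi.single i 1) = op (d i : R) • Pi.single i 1 := by
  rw [← single_eq_op_smul_single_one]
  ext j
  obtain rfl | hij := eq_or_ne j i <;> simp [*]

theorem map_diagonalEquiv_stdCoord (d : Fin n → Rˣ) (i : Fin n) :
    (stdCoord R n i).map (diagonalEquiv d).toLinearMap = stdCoord R n i := by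
  rw [stdCoord, Submodule.map_span, Set.image_singleton, LinearEquiv.coe_coe,
    diagonalEquiv_single_one, Submodule.span_singleton_smul_eq (d i).isUnit.op]

theorem orderIsoMapComap_diagonalEquiv_mem_fixing (d : Fin n → Rˣ) :
    Submodule.orderIsoMapComap (diagonalEquiv d) ∈ fixing (stdSublattice R n) := by
  rintro _ ⟨S, rfl⟩
  simp only [Submodule.orderIsoMapComap_apply, Submodule.map_iSup, map_diagonalEquiv_stdCoord]

theorem diagonalEquiv_mem_of_fixed {l : RLat R n}
    (hl : ∀ f ∈ fixing (stdSublattice R n), f l = l) (d : Fin n → Rˣ) {v : Fin n → R}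
    (hv : v ∈ l) : diagonalEquiv d v ∈ l := by
  have hmap := hl _ (orderIsoMapComap_diagonalEquiv_mem_fixing d)
  exact hmap ▸ Submodule.mem_map_of_mem hv

end DiagonalAutomorphisms

section CoordinateStabilizer

/-- The non-unital ring of those `a : R` for which the matrix `a E_{kk}` maps `l` into itself. -/
def coordStabilizer (l : RLat R n) (k : Fin n) : NonUnitalSubring R where
  carrier := {a | ∀ v ∈ l, Pi.single k (a * v k) ∈ l}
  zero_mem' v _ := by simp
  add_mem' ha hb v hv := by
    rw [add_mul, Pi.single_add]
    exact l.add_mem (ha v hv) (hb v hv)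
  neg_mem' ha v hv := by
    rw [neg_mul, Pi.single_neg]
    exact l.neg_mem (ha v hv)
  mul_mem' ha hb v hv := by simpa [mul_assoc] using ha _ (hb v hv)

theorem unitAugmentation_le_coordStabilizer {l : RLat R n}
    (hl : ∀ (d : Fin n → Rˣ), ∀ v ∈ l, diagonalEquiv d v ∈ l) (k : Fin n) :
    unitAugmentation R ≤ coordStabilizer l k := by
  refine NonUnitalSubring.closure_le.2 ?_
  rintro _ ⟨u, rfl⟩ v hv
  have hsub : Pi.single k (((u : R) - 1) * v k) = diagonalEquiv (Pi.mulSingle k u) v - v := by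
    ext j
    obtain rfl | hjk := eq_or_ne j k <;> simp [*, sub_mul]
  rw [hsub]
  exact l.sub_mem (hl _ v hv) hv

theorem single_one_mem_of_coordStabilizer_eq_top [IsSimpleRing R] {l : RLat R n} {k : Fin n}
    (hl : coordStabilizer l k = ⊤) {v : Fin n → R} (hv : v ∈ l) (hvk : v k ≠ 0) :
    Pi.single k 1 ∈ l := by
  have hstab (a : R) {w : Fin n → R} (hw : w ∈ l) : Pi.single k (a * w k) ∈ l :=
    (hl ▸ NonUnitalSubring.mem_top a : a ∈ coordStabilizer l k) w hw
  let I : TwoSidedIdeal R := TwoSidedIdeal.mk' {r | Pi.single k r ∈ l}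
    (by simp)
    (fun hx hy => by simpa [Pi.single_add] using l.add_mem hx hy)
    (fun hx => by simpa [Pi.single_neg] using l.neg_mem hx)
    (fun {a _} hx => by simpa using hstab a hx)
    (fun {_ b} hx => by simpa [← Pi.single_smul] using l.smul_mem (op b) hx)
  have hvI : v k ∈ I := by simpa [I] using hstab 1 hv
  simpa [I] using IsSimpleRing.one_mem_of_ne_zero_mem I hvk hvI

end CoordinateStabilizer

theorem mem_stdSublattice_of_single_one_mem {l : RLat R n}
    (hl : ∀ v ∈ l, ∀ k, v k ≠ 0 → Pi.single k 1 ∈ l) : l ∈ stdSublattice R n := by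
  refine ⟨{k | Pi.single k 1 ∈ l}, le_antisymm ?_ fun v hv => ?_⟩
  · exact iSup₂_le fun k hk => (Submodule.span_singleton_le_iff_mem _ _).2 hk
  · rw [← Finset.univ_sum_single v]
    refine Submodule.sum_mem _ fun k _ => ?_
    obtain hvk | hvk := eq_or_ne (v k) 0
    · rw [hvk, Pi.single_zero]
      exact Submodule.zero_mem _
    · rw [single_eq_op_smul_single_one]
      exact Submodule.smul_mem _ _ <| Submodule.mem_iSup_of_mem k <|
        Submodule.mem_iSup_of_mem (hl v hv k hvk) (Submodule.mem_span_singleton_self _)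

theorem fixedLattice_of_fixing_stdSublattice_eq_general [IsSimpleRing R]
    (hR : unitAugmentation R = ⊤) :
    {l : RLat R n | ∀ f ∈ fixing (stdSublattice R n), f l = l} = stdSublattice R n := by
  refine Set.Subset.antisymm (fun l hl => ?_) fun l hl f hf => hf l hl
  have hstab (k : Fin n) : coordStabilizer l k = ⊤ :=
    top_le_iff.1 <| hR ▸
      unitAugmentation_le_coordStabilizer (fun d _ => diagonalEquiv_mem_of_fixed hl d) k
  exact mem_stdSublattice_of_single_one_mem fun _ hv k =>
    single_one_mem_of_coordStabilizer_eq_top (hstab k) hv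

/-- for `R = M(m,T)` (`T` a division ring) not isomorphic to
`F₂, F₃, F₄, F₅, M(2,F₂)`, and `L` the lattice of right submodules of `Rⁿ`
(`n ≥ 2`), `G = Aut L` and `H = G(L₀)`, we have `L(H) = L₀`. -/
theorem fixedLattice_of_fixing_stdSublattice_eq
    (T : Type) [DivisionRing T] (m : ℕ) (hm : 1 ≤ m) (n : ℕ) (hn : 2 ≤ n)
    (h2 : ¬Nonempty (Matrix (Fin m) (Fin m) T ≃+* ZMod 2))
    (h3 : ¬Nonempty (Matrix (Fin m) (Fin m) T ≃+* ZMod 3))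
    (h4 : ¬Nonempty (Matrix (Fin m) (Fin m) T ≃+* GaloisField 2 2))
    (h5 : ¬Nonempty (Matrix (Fin m) (Fin m) T ≃+* ZMod 5))
    (hM : ¬Nonempty (Matrix (Fin m) (Fin m) T ≃+* Matrix (Fin 2) (Fin 2) (ZMod 2))) :
    {l : RLat (Matrix (Fin m) (Fin m) T) n |
        ∀ f ∈ fixing (stdSublattice (Matrix (Fin m) (Fin m) T) n), f l = l} =
      stdSublattice (Matrix (Fin m) (Fin m) T) n := by
  have : NeZero m := ⟨Nat.one_le_iff_ne_zero.1 hm⟩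
  exact fixedLattice_of_fixing_stdSublattice_eq_general
    (unitAugmentation_matrix_divisionRing_eq_top h2)
end
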